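/- Let (Ω, 𝔉, ν) be an atomless probability space, let τ > 0, and let S ∈ L¹(ν) satisfy ∫ S dν = 0 and |∫_X S dν| ≤ (2τ)^{-1/2}·I(ν(X)) for every measurable set X ⊆ Ω. Then for every real p ≥ 1, τ^{p/2}·∫ |S|^p dν ≤ Γ((p+1)/2)/√π. -/

import Mathlib

open Real MeasureTheory

/-- The standard Gaussian density. -/
noncomputable def gaussPdf (z : ℝ) : ℝ := (Real.sqrt (2 * Real.pi))⁻¹ * Real.exp (-z ^ 2 / 2)

/-- The standard normal CDF. -/
noncomputable def Phi (r : ℝ) : ℝ := ∫ z in Set.Iic r, gaussPdf z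

/-- The inverse of the standard normal CDF. -/
noncomputable def PhiInv : ℝ → ℝ := Function.invFun Phi

/-- The Gaussian isoperimetric profile `I = φ ∘ Φ⁻¹`. -/
noncomputable def gaussI (a : ℝ) : ℝ := gaussPdf (PhiInv a)

/- The hypothesis says that no set of `ν`-measure `a` carries more of the integral of
`T = √(2τ) S` than the half-line of Gaussian measure `a` carries of the integral of `x ↦ -x`,
because `∫_{x ≤ r} -x dγ = φ(r)`. Testing it on the superlevel sets `{T > t}`, which are extremal
for `∫_X (T - t)`, bounds `∫ (T - t)⁺ dν` by `∫ (-x - t)⁺ dγ = ∫ (x - t)⁺ dγ`, and similarly for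
`-T`. By Taylor's formula with integral remainder, `|y|^p` is for `p > 1` a mixture of the functions
`(|y| - t)⁺`, `t ≥ 0`, with weights `p (p - 1) t^(p - 2)`, so the `p`-th absolute moment of `T` is
at most that of a standard Gaussian variable. -/

open ProbabilityTheory Set
open scoped ENNReal NNReal

section StopLoss

variable {Ω Ω' : Type*} [MeasurableSpace Ω] [MeasurableSpace Ω'] {μ : Measure Ω} {ν : Measure Ω'}
  {f : Ω → ℝ} {g : Ω' → ℝ}

/-- The stop-loss transform `t ↦ ∫ (f - t)⁺ dμ`, whose pointwise order is the increasing convex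
order. The positive part is taken by `ENNReal.ofReal`, so the transform of a non-integrable `f`
is not a junk value. -/
noncomputable def stopLoss (μ : Measure Ω) (f : Ω → ℝ) (t : ℝ) : ℝ≥0∞ :=
  ∫⁻ x, ENNReal.ofReal (f x - t) ∂μ

lemma ofReal_integral_le_lintegral_ofReal (f : Ω → ℝ) :
    ENNReal.ofReal (∫ x, f x ∂μ) ≤ ∫⁻ x, ENNReal.ofReal (f x) ∂μ := by
  by_cases hf : Integrable f μ
  · refine ENNReal.ofReal_le_of_le_toReal ?_
    rw [integral_eq_lintegral_pos_part_sub_lintegral_neg_part hf]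
    exact sub_le_self _ ENNReal.toReal_nonneg
  · simp [integral_undef hf]

lemma setIntegral_sub_const [IsFiniteMeasure μ] (hf : Integrable f μ) (s : Set Ω) (t : ℝ) :
    ∫ x in s, (f x - t) ∂μ = ∫ x in s, f x ∂μ - t * μ.real s := by
  rw [integral_sub hf.integrableOn (integrable_const t), setIntegral_const, smul_eq_mul, mul_comm]

lemma ofReal_setIntegral_sub_le_stopLoss [IsFiniteMeasure μ] (hf : Integrable f μ) (s : Set Ω)
    (t : ℝ) : ENNReal.ofReal (∫ x in s, f x ∂μ - t * μ.real s) ≤ stopLoss μ f t := by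
  rw [← setIntegral_sub_const hf]
  exact (ofReal_integral_le_lintegral_ofReal _).trans (setLIntegral_le_lintegral _ _)

lemma exists_measurableSet_stopLoss_eq [IsFiniteMeasure μ] (hf : Integrable f μ) (t : ℝ) :
    ∃ s, MeasurableSet s ∧
      stopLoss μ f t = ENNReal.ofReal (∫ x in s, f x ∂μ - t * μ.real s) := by
  obtain ⟨f', hf', hff'⟩ := hf.aestronglyMeasurable.aemeasurable
  have hs : MeasurableSet {x | t < f' x} := measurableSet_lt measurable_const hf'
  have hnonneg : 0 ≤ᵐ[μ.restrict {x | t < f' x}] fun x => f x - t := by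
    filter_upwards [ae_restrict_of_ae hff', ae_restrict_mem hs] with x hx hxt
    exact sub_nonneg.2 (hx ▸ le_of_lt hxt)
  have hint : Integrable (fun x => f x - t) (μ.restrict {x | t < f' x}) :=
    (hf.sub (integrable_const t)).integrableOn
  refine ⟨_, hs, ?_⟩
  rw [← setIntegral_sub_const hf, ofReal_integral_eq_lintegral_ofReal hint hnonneg,
    ← lintegral_indicator hs, stopLoss]
  refine lintegral_congr_ae ?_
  filter_upwards [hff'] with x hx
  by_cases hxt : x ∈ {x | t < f' x}
  · rw [indicator_of_mem hxt]
  · rw [indicator_of_notMem hxt, ENNReal.ofReal_of_nonpos (sub_nonpos.2 (hx ▸ not_lt.1 hxt))]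

lemma stopLoss_le_stopLoss_of_setIntegral_le [IsFiniteMeasure μ] [IsFiniteMeasure ν]
    (hf : Integrable f μ) (hg : Integrable g ν)
    (h : ∀ s, MeasurableSet s →
      ∃ s' : Set Ω', ν.real s' = μ.real s ∧ ∫ x in s, f x ∂μ ≤ ∫ x in s', g x ∂ν) (t : ℝ) :
    stopLoss μ f t ≤ stopLoss ν g t := by
  obtain ⟨s, hs, hst⟩ := exists_measurableSet_stopLoss_eq hf t
  obtain ⟨s', hs', hle⟩ := h s hs
  calc stopLoss μ f t = ENNReal.ofReal (∫ x in s, f x ∂μ - t * μ.real s) := hst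
    _ ≤ ENNReal.ofReal (∫ x in s', g x ∂ν - t * ν.real s') := by rw [hs']; gcongr
    _ ≤ stopLoss ν g t := ofReal_setIntegral_sub_le_stopLoss hg s' t

lemma stopLoss_abs (hf : AEMeasurable f μ) {t : ℝ} (ht : 0 ≤ t) :
    stopLoss μ (fun x => |f x|) t = stopLoss μ f t + stopLoss μ (fun x => -f x) t := by
  rw [stopLoss, stopLoss, stopLoss, ← lintegral_add_left' (by fun_prop)]
  refine lintegral_congr fun x => ?_
  rcases le_total 0 (f x) with h | h
  · rw [abs_of_nonneg h, ENNReal.ofReal_of_nonpos (p := -f x - t) (by linarith), add_zero]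
  · rw [abs_of_nonpos h, ENNReal.ofReal_of_nonpos (p := f x - t) (by linarith), zero_add]

lemma ofReal_rpow_eq_setLIntegral_Ioc {p : ℝ} (hp : 1 < p) {x : ℝ} (hx : 0 ≤ x) :
    ENNReal.ofReal (x ^ p) =
      ∫⁻ t in Ioc 0 x, ENNReal.ofReal (p * (p - 1) * t ^ (p - 2) * (x - t)) := by
  have hpos : ∀ t ∈ Ioc 0 x, 0 ≤ p * (p - 1) * t ^ (p - 2) * (x - t) := fun t ht =>
    mul_nonneg (mul_nonneg (by nlinarith) (rpow_nonneg ht.1.le _)) (sub_nonneg.2 ht.2)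
  have hcont : Continuous fun t : ℝ => p * x * t ^ (p - 1) - (p - 1) * t ^ p :=
    ((continuous_rpow_const (by linarith)).const_mul _).sub
      ((continuous_rpow_const (by linarith)).const_mul _)
  have hderiv : ∀ t ∈ Ioo 0 x, HasDerivAt (fun t : ℝ => p * x * t ^ (p - 1) - (p - 1) * t ^ p)
      (p * (p - 1) * t ^ (p - 2) * (x - t)) t := by
    intro t ht
    refine (((hasDerivAt_rpow_const (p := p - 1) (Or.inl ht.1.ne')).const_mul (p * x)).sub
      ((hasDerivAt_rpow_const (p := p) (Or.inl ht.1.ne')).const_mul (p - 1))).congr_deriv ?_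
    rw [show p - 1 = p - 2 + 1 by ring, rpow_add_one ht.1.ne']
    ring_nf
  have hint := intervalIntegral.integrableOn_deriv_of_nonneg hcont.continuousOn hderiv
    fun t ht => hpos t (Ioo_subset_Ioc_self ht)
  have hxp : p * x * x ^ (p - 1) = p * x ^ p := by
    rw [mul_assoc, mul_comm x, ← rpow_add_one' hx (by linarith), sub_add_cancel]
  rw [← ofReal_integral_eq_lintegral_ofReal hint ((ae_restrict_mem measurableSet_Ioc).mono hpos),
    ← intervalIntegral.integral_of_le hx, intervalIntegral.integral_eq_sub_of_hasDerivAt_of_le hx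
      hcont.continuousOn hderiv ((intervalIntegrable_iff_integrableOn_Ioc_of_le hx).2 hint), hxp,
    zero_rpow (by linarith), zero_rpow (by linarith)]
  ring_nf

lemma ofReal_rpow_eq_setLIntegral_Ioi {p : ℝ} (hp : 1 < p) {x : ℝ} (hx : 0 ≤ x) :
    ENNReal.ofReal (x ^ p) = ∫⁻ t in Ioi (0 : ℝ),
      ENNReal.ofReal (p * (p - 1) * t ^ (p - 2)) * ENNReal.ofReal (x - t) := by
  rw [ofReal_rpow_eq_setLIntegral_Ioc hp hx, ← Ioi_inter_Iic, inter_comm,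
    ← setLIntegral_indicator measurableSet_Iic]
  refine setLIntegral_congr_fun measurableSet_Ioi fun t ht => ?_
  have ht0 : (0 : ℝ) ≤ t := (mem_Ioi.1 ht).le
  rw [← ENNReal.ofReal_mul (mul_nonneg (by nlinarith) (rpow_nonneg ht0 _))]
  by_cases htx : t ≤ x
  · exact indicator_of_mem (mem_Iic.2 htx) _
  · rw [indicator_of_notMem (by simpa using htx), ENNReal.ofReal_of_nonpos]
    exact mul_nonpos_of_nonneg_of_nonpos
      (mul_nonneg (by nlinarith) (rpow_nonneg ht0 _)) (by linarith)

lemma lintegral_rpow_eq_lintegral_stopLoss [SFinite μ] (hf : AEMeasurable f μ) (hf0 : 0 ≤ᵐ[μ] f)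
    {p : ℝ} (hp : 1 < p) :
    ∫⁻ x, ENNReal.ofReal (f x ^ p) ∂μ =
      ∫⁻ t in Ioi (0 : ℝ), ENNReal.ofReal (p * (p - 1) * t ^ (p - 2)) * stopLoss μ f t := by
  rw [lintegral_congr_ae (hf0.mono fun x hx => ofReal_rpow_eq_setLIntegral_Ioi hp hx),
    lintegral_lintegral_swap]
  · exact lintegral_congr fun t => lintegral_const_mul'' _ (by fun_prop)
  · exact AEMeasurable.mul (by fun_prop)
      (hf.comp_fst.sub measurable_snd.aemeasurable).ennreal_ofReal

lemma lintegral_rpow_le_of_stopLoss_le [SFinite μ] [SFinite ν] (hf : AEMeasurable f μ)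
    (hf0 : 0 ≤ᵐ[μ] f) (hg : AEMeasurable g ν) (hg0 : 0 ≤ᵐ[ν] g)
    (h : ∀ t, 0 ≤ t → stopLoss μ f t ≤ stopLoss ν g t) {p : ℝ} (hp : 1 ≤ p) :
    ∫⁻ x, ENNReal.ofReal (f x ^ p) ∂μ ≤ ∫⁻ x, ENNReal.ofReal (g x ^ p) ∂ν := by
  rcases hp.eq_or_lt with rfl | hp
  · simpa [stopLoss] using h 0 le_rfl
  · rw [lintegral_rpow_eq_lintegral_stopLoss hf hf0 hp,
      lintegral_rpow_eq_lintegral_stopLoss hg hg0 hp]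
    exact setLIntegral_mono' measurableSet_Ioi fun t ht => by gcongr; exact h t (mem_Ioi.1 ht).le

end StopLoss

section Gaussian

lemma exists_cdf_eq (μ : Measure ℝ) [IsProbabilityMeasure μ] [NullSingletonClass μ] {a : ℝ}
    (ha : a ∈ Ioo 0 1) : ∃ r, cdf μ r = a := by
  have hcont : Continuous (cdf μ) := continuous_iff_continuousAt.2 fun x => by
    have hjump : ENNReal.ofReal (cdf μ x - Function.leftLim (cdf μ) x) = 0 := by
      rw [← StieltjesFunction.measure_singleton, measure_cdf, measure_singleton]
    rw [(cdf μ).mono.continuousAt_iff_leftLim_eq_rightLim, StieltjesFunction.rightLim_eq]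
    exact ((cdf μ).mono.leftLim_le le_rfl).antisymm (by simpa using hjump)
  obtain ⟨b, hb⟩ := ((tendsto_cdf_atBot μ).eventually (gt_mem_nhds ha.1)).exists
  obtain ⟨c, hc⟩ := ((tendsto_cdf_atTop μ).eventually (lt_mem_nhds ha.2)).exists
  exact mem_range_of_exists_le_of_exists_ge hcont ⟨b, hb.le⟩ ⟨c, hc.le⟩

lemma hasDerivAt_gaussianPDFReal (m : ℝ) (v : ℝ≥0) (x : ℝ) :
    HasDerivAt (gaussianPDFReal m v) (gaussianPDFReal m v x * ((m - x) / v)) x := by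
  have hexp : HasDerivAt (fun y : ℝ => -(y - m) ^ 2 / (2 * v)) ((m - x) / v) x := by
    refine ((((hasDerivAt_id x).sub_const m).pow 2).neg.div_const (2 * (v : ℝ))).congr_deriv ?_
    simp only [id_eq, Nat.cast_ofNat, Nat.add_one_sub_one, pow_one, mul_one]
    rw [← mul_neg, neg_sub, mul_div_mul_left _ _ two_ne_zero]
  refine (hexp.exp.const_mul (√(2 * π * v))⁻¹).congr_deriv ?_
  rw [gaussianPDFReal, ← mul_assoc]

lemma integrable_id_gaussianReal (m : ℝ) (v : ℝ≥0) :
    Integrable (fun x => x) (gaussianReal m v) :=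
  memLp_one_iff_integrable.1 (memLp_id_gaussianReal 1)

lemma setIntegral_Iic_sub_gaussianReal (m : ℝ) {v : ℝ≥0} (hv : v ≠ 0) (r : ℝ) :
    ∫ x in Iic r, (m - x) ∂gaussianReal m v = v * gaussianPDFReal m v r := by
  have hint : Integrable fun x => gaussianPDFReal m v x * ((m - x) / v) := by
    have h : Integrable (fun x => (m - x) / v) (gaussianReal m v) :=
      ((integrable_const m).sub (integrable_id_gaussianReal m v)).div_const _
    rw [gaussianReal_of_var_ne_zero m hv, integrable_withDensity_iff_integrable_smul'
      (measurable_gaussianPDF m v) (ae_of_all _ fun _ => gaussianPDF_lt_top)] at h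
    simpa only [toReal_gaussianPDF, smul_eq_mul] using h
  have hderiv : ∀ x ∈ Iic r, HasDerivAt (gaussianPDFReal m v)
      (gaussianPDFReal m v x * ((m - x) / v)) x := fun x _ => hasDerivAt_gaussianPDFReal m v x
  have hFTC := integral_Iic_of_hasDerivAt_of_tendsto' hderiv hint.integrableOn
    (tendsto_zero_of_hasDerivAt_of_integrableOn_Iic hderiv hint.integrableOn
      (integrable_gaussianPDFReal m v).integrableOn)
  rw [sub_zero] at hFTC
  rw [← hFTC, ← integral_const_mul, gaussianReal_of_var_ne_zero m hv,
    setIntegral_withDensity_eq_setIntegral_toReal_smul (measurable_gaussianPDF m v)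
      (ae_of_all _ fun _ => gaussianPDF_lt_top) _ measurableSet_Iic]
  refine integral_congr_ae (ae_of_all _ fun x => ?_)
  have hv' : (v : ℝ) ≠ 0 := NNReal.coe_ne_zero.2 hv
  simp only [toReal_gaussianPDF, smul_eq_mul]
  field_simp

lemma stopLoss_neg_gaussianReal (v : ℝ≥0) (t : ℝ) :
    stopLoss (gaussianReal 0 v) (fun x => -x) t = stopLoss (gaussianReal 0 v) (fun x => x) t := by
  have hmap : (gaussianReal 0 v).map (fun x => -x) = gaussianReal 0 v := by
    rw [gaussianReal_map_neg, neg_zero]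
  conv_rhs => rw [stopLoss, ← hmap, lintegral_map (by fun_prop) (by fun_prop)]
  rfl

lemma integral_abs_rpow_gaussianReal {v : ℝ≥0} (hv : v ≠ 0) {p : ℝ} (hp : -1 < p) :
    ∫ x, |x| ^ p ∂gaussianReal 0 v =
      (2 * v) ^ (p / 2) * (Gamma ((p + 1) / 2) / √π) := by
  have hv' : (0 : ℝ) < 2 * v := by positivity
  have hdensity : ∀ x : ℝ, gaussianPDFReal 0 v x • |x| ^ p =
      (fun y : ℝ => (√(2 * π * v))⁻¹ * (y ^ p * exp (-(2 * v : ℝ)⁻¹ * y ^ (2 : ℝ)))) |x| := by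
    intro x
    simp only [gaussianPDFReal, smul_eq_mul, rpow_two, sq_abs, sub_zero]
    ring_nf
  have hpow : ((2 * v : ℝ)⁻¹) ^ (-(p + 1) / 2) = (2 * v) ^ (p / 2) * √(2 * v) := by
    rw [inv_rpow hv'.le, ← rpow_neg hv'.le, sqrt_eq_rpow, ← rpow_add hv']
    ring_nf
  have hsqrt : √(2 * π * v) = √(2 * v) * √π := by rw [← sqrt_mul hv'.le]; ring_nf
  rw [integral_gaussianReal_eq_integral_smul hv, integral_congr_ae (ae_of_all _ hdensity),
    integral_comp_abs (f := fun y : ℝ =>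
      (√(2 * π * v))⁻¹ * (y ^ p * exp (-(2 * v : ℝ)⁻¹ * y ^ (2 : ℝ)))),
    integral_const_mul, integral_rpow_mul_exp_neg_mul_rpow two_pos hp (inv_pos.2 hv'), hpow, hsqrt]
  field_simp

lemma lintegral_abs_rpow_gaussianReal {v : ℝ≥0} (hv : v ≠ 0) {p : ℝ} (hp : -1 < p) :
    ∫⁻ x, ENNReal.ofReal (|x| ^ p) ∂gaussianReal 0 v =
      ENNReal.ofReal ((2 * v) ^ (p / 2) * (Gamma ((p + 1) / 2) / √π)) := by
  have hpos : 0 < ∫ x, |x| ^ p ∂gaussianReal 0 v := by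
    have hGamma : 0 < Gamma ((p + 1) / 2) := Gamma_pos_of_pos (by linarith)
    rw [integral_abs_rpow_gaussianReal hv hp]
    positivity
  rw [← integral_abs_rpow_gaussianReal hv hp, ofReal_integral_eq_lintegral_ofReal
    (.of_integral_ne_zero hpos.ne') (ae_of_all _ fun x => rpow_nonneg (abs_nonneg x) p)]

end Gaussian

section IsoperimetricProfile

lemma gaussPdf_eq_gaussianPDFReal : gaussPdf = gaussianPDFReal 0 1 := by
  ext x
  simp [gaussPdf, gaussianPDFReal]

lemma Phi_eq_real_Iic (r : ℝ) : Phi r = (gaussianReal 0 1).real (Iic r) := by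
  rw [measureReal_def, gaussianReal_apply_eq_integral 0 one_ne_zero, ENNReal.toReal_ofReal
    (integral_nonneg (gaussianPDFReal_nonneg 0 1)), Phi, gaussPdf_eq_gaussianPDFReal]

lemma Phi_PhiInv {a : ℝ} (ha : a ∈ Ioo 0 1) : Phi (PhiInv a) = a := by
  have := nullSingletonClass_gaussianReal (μ := 0) one_ne_zero
  obtain ⟨r, hr⟩ := exists_cdf_eq (gaussianReal 0 1) ha
  exact Function.invFun_eq ⟨r, by rw [Phi_eq_real_Iic, ← cdf_eq_real, hr]⟩

lemma setIntegral_Iic_PhiInv (a : ℝ) :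
    ∫ x in Iic (PhiInv a), -x ∂gaussianReal 0 1 = gaussI a := by
  simpa [gaussI, gaussPdf_eq_gaussianPDFReal] using
    setIntegral_Iic_sub_gaussianReal 0 one_ne_zero (PhiInv a)

variable {Ω : Type*} [MeasurableSpace Ω] {ν : Measure Ω} [IsProbabilityMeasure ν] {T : Ω → ℝ}

-- `PhiInv` is a junk value at `0` and `1`, so null and conull sets are treated separately, the
-- latter through the mean of `T`.
lemma stopLoss_le_stopLoss_gaussianReal (hT : Integrable T ν) (hmean : ∫ x, T x ∂ν = 0)
    (hset : ∀ X, MeasurableSet X → ∫ x in X, T x ∂ν ≤ gaussI (ν.real X)) (t : ℝ) :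
    stopLoss ν T t ≤ stopLoss (gaussianReal 0 1) (fun x => x) t := by
  rw [← stopLoss_neg_gaussianReal]
  have hneg : Integrable (fun x => -x) (gaussianReal 0 1) := (integrable_id_gaussianReal 0 1).neg
  refine stopLoss_le_stopLoss_of_setIntegral_le hT hneg (fun X hX => ?_) t
  rcases (measureReal_nonneg (μ := ν) (s := X)).eq_or_lt with h0 | h0
  · refine ⟨∅, by rw [measureReal_empty, h0], ?_⟩
    rw [setIntegral_measure_zero _ ((measureReal_eq_zero_iff).1 h0.symm), setIntegral_empty]
  rcases (measureReal_le_one (μ := ν) (s := X)).eq_or_lt with h1 | h1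
  · refine ⟨univ, by rw [probReal_univ, h1], ?_⟩
    have hconull : X =ᵐ[ν] univ := by
      rw [ae_eq_univ, prob_compl_eq_zero_iff hX, ← ofReal_measureReal, h1, ENNReal.ofReal_one]
    rw [setIntegral_congr_set hconull, setIntegral_univ, setIntegral_univ, hmean, integral_neg,
      integral_id_gaussianReal, neg_zero]
  · refine ⟨Iic (PhiInv (ν.real X)), ?_, ?_⟩
    · rw [← Phi_eq_real_Iic, Phi_PhiInv ⟨h0, h1⟩]
    · rw [setIntegral_Iic_PhiInv]
      exact hset X hX

lemma stopLoss_abs_le_stopLoss_abs_gaussianReal (hT : Integrable T ν) (hmean : ∫ x, T x ∂ν = 0)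
    (hset : ∀ X, MeasurableSet X → |∫ x in X, T x ∂ν| ≤ gaussI (ν.real X)) {t : ℝ} (ht : 0 ≤ t) :
    stopLoss ν (fun x => |T x|) t ≤ stopLoss (gaussianReal 0 1) (fun x => |x|) t := by
  rw [stopLoss_abs hT.1.aemeasurable ht, stopLoss_abs aemeasurable_id' ht,
    stopLoss_neg_gaussianReal]
  refine add_le_add
    (stopLoss_le_stopLoss_gaussianReal hT hmean (fun X hX => (le_abs_self _).trans (hset X hX)) t)
    (stopLoss_le_stopLoss_gaussianReal hT.neg (by simp [integral_neg, hmean]) (fun X hX => ?_) t)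
  rw [Pi.neg_def, integral_neg]
  exact (neg_le_abs _).trans (hset X hX)

theorem lintegral_abs_rpow_le_of_abs_setIntegral_le_gaussI (hT : Integrable T ν)
    (hmean : ∫ x, T x ∂ν = 0)
    (hset : ∀ X, MeasurableSet X → |∫ x in X, T x ∂ν| ≤ gaussI (ν.real X)) {p : ℝ} (hp : 1 ≤ p) :
    ∫⁻ x, ENNReal.ofReal (|T x| ^ p) ∂ν ≤
      ENNReal.ofReal (2 ^ (p / 2) * (Gamma ((p + 1) / 2) / √π)) := by
  have hmoment := lintegral_abs_rpow_gaussianReal one_ne_zero (show -1 < p by linarith)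
  rw [NNReal.coe_one, mul_one] at hmoment
  rw [← hmoment]
  exact lintegral_rpow_le_of_stopLoss_le hT.1.aemeasurable.abs (ae_of_all _ fun x => abs_nonneg _)
    aemeasurable_id'.abs (ae_of_all _ fun x => abs_nonneg _)
    (fun t ht => stopLoss_abs_le_stopLoss_abs_gaussianReal hT hmean hset ht) hp

end IsoperimetricProfile

lemma lintegral_ofReal_abs_const_mul_rpow {Ω : Type*} [MeasurableSpace Ω] (μ : Measure Ω)
    (c : ℝ) (f : Ω → ℝ) (p : ℝ) :
    ∫⁻ x, ENNReal.ofReal (|c * f x| ^ p) ∂μ =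
      ENNReal.ofReal (|c| ^ p) * ∫⁻ x, ENNReal.ofReal (|f x| ^ p) ∂μ := by
  rw [← lintegral_const_mul' _ _ ENNReal.ofReal_ne_top]
  refine lintegral_congr fun x => ?_
  rw [abs_mul, mul_rpow (abs_nonneg c) (abs_nonneg _), ENNReal.ofReal_mul (by positivity)]

theorem stmt17_general {Ω : Type*} [MeasurableSpace Ω] (ν : Measure Ω) [IsProbabilityMeasure ν]
    (τ : ℝ) (hτ : 0 < τ) (S : Ω → ℝ) (hS : Integrable S ν)
    (hmean : ∫ x, S x ∂ν = 0)
    (hset : ∀ X : Set Ω, MeasurableSet X →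
      |∫ x in X, S x ∂ν| ≤ (√(2 * τ))⁻¹ * gaussI (ν X).toReal)
    (p : ℝ) (hp : 1 ≤ p) :
    ENNReal.ofReal (τ ^ (p / 2)) * ∫⁻ x, ENNReal.ofReal (|S x| ^ p) ∂ν ≤
      ENNReal.ofReal (Gamma ((p + 1) / 2) / √π) := by
  have hc : 0 < √(2 * τ) := sqrt_pos.2 (by positivity)
  have hscaled : ∀ X, MeasurableSet X → |∫ x in X, √(2 * τ) * S x ∂ν| ≤ gaussI (ν.real X) := by
    intro X hX
    rw [integral_const_mul, abs_mul, abs_of_pos hc, ← le_inv_mul_iff₀ hc]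
    exact hset X hX
  have hmoment := lintegral_abs_rpow_le_of_abs_setIntegral_le_gaussI (hS.const_mul √(2 * τ))
    (by rw [integral_const_mul, hmean, mul_zero]) hscaled hp
  have hcp : |√(2 * τ)| ^ p = 2 ^ (p / 2) * τ ^ (p / 2) := by
    rw [abs_of_pos hc, ← rpow_div_two_eq_sqrt p (by positivity), mul_rpow zero_le_two hτ.le]
  rw [lintegral_ofReal_abs_const_mul_rpow, hcp, ENNReal.ofReal_mul (by positivity),
    ENNReal.ofReal_mul (by positivity), mul_assoc] at hmoment
  exact (ENNReal.mul_le_mul_iff_right (ENNReal.ofReal_pos.2 (by positivity)).ne'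
    ENNReal.ofReal_ne_top).1 hmoment

/-- Moment estimates: on an atomless probability space, if `S ∈ L¹(ν)` has mean zero and
`|∫_X S dν| ≤ (2τ)^{-1/2} I(ν(X))` for every measurable `X`, then for every `p ≥ 1`,
`τ^{p/2} ∫ |S|^p dν ≤ Γ((p+1)/2)/√π`. -/
theorem stmt17 {Ω : Type*} [MeasurableSpace Ω] (ν : Measure Ω) [IsProbabilityMeasure ν]
    (hatomless : ∀ s : Set Ω, MeasurableSet s → 0 < ν s →
      ∃ t, t ⊆ s ∧ MeasurableSet t ∧ 0 < ν t ∧ ν t < ν s)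
    (τ : ℝ) (hτ : 0 < τ) (S : Ω → ℝ) (hS : Integrable S ν)
    (hmean : ∫ x, S x ∂ν = 0)
    (hset : ∀ X : Set Ω, MeasurableSet X →
      |∫ x in X, S x ∂ν| ≤ (Real.sqrt (2 * τ))⁻¹ * gaussI (ν X).toReal)
    (p : ℝ) (hp : 1 ≤ p) :
    ENNReal.ofReal (τ ^ (p / 2)) * ∫⁻ x, ENNReal.ofReal (|S x| ^ p) ∂ν ≤
      ENNReal.ofReal (Real.Gamma ((p + 1) / 2) / Real.sqrt Real.pi) :=
  stmt17_general ν τ hτ S hS hmean hset p hp
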